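/- For all (b,c) ∈ ℤ_{≥0}², with φ_{b,c} = 3b(b−1) + 2c(3c−2) + 8bc, every coefficient of q^{−φ_{b,c}}·Q_{b,c} lies in the subring ℤ[q^{−2}] of K = ℚ(q); equivalently, every coefficient of Q_{b,c} is an integer polynomial in q² of q-degree at most φ_{b,c}. -/

import Mathlib

noncomputable section

open MvPolynomial

/-- The field `K = ℚ(q)` of rational functions in `q` over `ℚ`. -/
abbrev K : Type := RatFunc ℚ

/-- The variable `q ∈ K = ℚ(q)`. -/
def q : K := RatFunc.X

/-- The polynomial ring `K[x,y,z,w]`. -/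
abbrev P4 : Type := MvPolynomial (Fin 4) K

def xP : P4 := X 0
def yP : P4 := X 1
def zP : P4 := X 2
def wP : P4 := X 3

/-- The `K`-algebra map `K[x,y,z,w] → K[x,y,z,w]` rescaling the variables:
`x ↦ q^a·x`, `y ↦ q^b·y`, `z ↦ q^c·z`, `w ↦ q^d·w`. -/
def scl (a b c d : ℤ) : P4 →ₐ[K] P4 :=
  aeval ![C (q ^ a) * X 0, C (q ^ b) * X 1, C (q ^ c) * X 2, C (q ^ d) * X 3]

/-- The polynomials `Q_{b,0}(x,y,z,w)`, defined by the recursion (rec1) of the paper. -/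
def Qb0 : ℕ → P4
  | 0 => 1
  | b + 1 =>
      C (q ^ (4 * (b : ℤ))) * wP * yP * (zP - 1) * scl 0 0 (-4) 0 (Qb0 b)
    + C (q ^ (4 * (b : ℤ))) * wP * xP * (yP - 1) * yP * zP * scl 0 (-2) 0 0 (Qb0 b)
    + C (q ^ (6 * (b : ℤ))) * (wP - 1) * (yP - 1) * scl 0 (-2) 0 (-2) (Qb0 b)
    + C (q ^ (4 * (b : ℤ))) * wP * (xP - 1) * yP * (zP - 1) * scl (-4) 2 (-4) 0 (Qb0 b)
    + C (q ^ (6 * (b : ℤ))) * (wP - 1) * (xP - 1) * yP * scl (-4) 0 0 (-2) (Qb0 b)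

/-- The polynomials `Q_{b,c}(x,y,z,w)`: for `c ≥ 1` they are defined by the
recursion (rec2) of the paper, lowering `c`; for `c = 0` by `Qb0`. -/
def Q : ℕ → ℕ → P4
  | b, 0 => Qb0 b
  | b, c + 1 =>
      - (C (q ^ (4 * (b : ℤ) + 8 * (c : ℤ))) * wP ^ 2 * yP * (zP - 1) * zP)
          * scl 0 0 (-4) 0 (Q b c)
    + (C (q ^ (4 * (b : ℤ) + 4 * (c : ℤ) - 2)) * wP * xP * (yP - 1) * zP)
          * (C (q ^ (2 * (b : ℤ) + 4 * (c : ℤ) + 4)) - C (q ^ (2 : ℤ)) * wP * yP * zP)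
          * scl 0 (-2) 0 0 (Q b c)
    - (C (q ^ (6 * (b : ℤ) + 8 * (c : ℤ))) * (wP - 1) * wP * (yP - 1) * zP)
          * scl 0 (-2) 0 (-2) (Q b c)
    + (C (q ^ (4 * (b : ℤ) + 8 * (c : ℤ) - 2)) * wP * (xP - 1) * (zP - 1))
          * (C (q ^ (2 * (b : ℤ) + 4 * (c : ℤ) + 4)) - C (q ^ (2 : ℤ)) * wP * yP * zP)
          * scl (-4) 2 (-4) 0 (Q b c)
    + (C (q ^ (6 * (b : ℤ) + 8 * (c : ℤ) - 2)) * (wP - 1) * (xP - 1))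
          * (C (q ^ (2 * (b : ℤ) + 4 * (c : ℤ) + 4)) - C (q ^ (2 : ℤ)) * wP * yP * zP)
          * scl (-4) 0 0 (-2) (Q b c)

/-!
Of the five substitutions in the recursions, four multiply each monomial by a power of `q⁻²`.
The remaining one, `(x, y, z, w) ↦ (q⁻⁴x, q²y, q⁻⁴z, w)`, multiplies a monomial of
weight `k` by `q ^ (2 * k)`, where `x, y, z, w` have weights `-2, 1, -2, 0`. We therefore show by
induction that, besides the coefficient bound, every monomial of `Q b c` has weight at most `b`: the
exceptional substitution then costs at most a factor `q ^ (2 * b)`, and in both recursions its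
coefficient has `q`-degree exactly `2 * b` below the increment of `φ_{b,c}`.
-/

section Rescale

variable {σ R : Type*} [CommSemiring R]

/-- The substitution `X i ↦ s i * X i` of a polynomial ring. -/
def rescaleVars (s : σ → R) : MvPolynomial σ R →ₐ[R] MvPolynomial σ R :=
  aeval fun i => C (s i) * X i

theorem rescaleVars_monomial (s : σ → R) (m : σ →₀ ℕ) (a : R) :
    rescaleVars s (monomial m a) = monomial m ((m.prod fun i k => s i ^ k) * a) := by
  simp only [rescaleVars, aeval_monomial, algebraMap_eq, mul_pow, Finsupp.prod_mul, ← C_pow]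
  rw [← map_finsuppProd C, ← mul_assoc, ← C_mul, ← monomial_eq, mul_comm a]

theorem coeff_rescaleVars (s : σ → R) (p : MvPolynomial σ R) (m : σ →₀ ℕ) :
    coeff m (rescaleVars s p) = (m.prod fun i k => s i ^ k) * coeff m p := by
  classical
  induction p using MvPolynomial.induction_on' with
  | monomial u a =>
    rw [rescaleVars_monomial, coeff_monomial, coeff_monomial, mul_ite, mul_zero]
    exact ite_congr rfl (fun h => by rw [h]) fun _ => rfl
  | add p r hp hr => rw [map_add, coeff_add, hp, hr, coeff_add, mul_add]

theorem support_rescaleVars_subset (s : σ → R) (p : MvPolynomial σ R) :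
    (rescaleVars s p).support ⊆ p.support := fun m hm => by
  rw [mem_support_iff, coeff_rescaleVars] at hm
  exact mem_support_iff.2 (right_ne_zero_of_mul hm)

end Rescale

section WeightedCoeffs

variable {σ R Γ : Type*} [CommRing R] [AddCommMonoid Γ] [PartialOrder Γ] {A : Subring R}
  {M N : Submodule A R} {wt : σ → Γ} {n n' : Γ} {p r : MvPolynomial σ R}

/-- The polynomials whose coefficients lie in `M` and whose monomials have `wt`-weight at most
`n`. They filter the polynomial ring as `M` and `n` grow. -/
def weightedCoeffsIn (M : Submodule A R) (wt : σ → Γ) (n : Γ) :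
    Submodule A (MvPolynomial σ R) :=
  coeffsIn σ M ⊓ (restrictSupport R {m | Finsupp.weight wt m ≤ n}).restrictScalars A

theorem weightedCoeffsIn_mono (hM : M ≤ N) (hn : n ≤ n') :
    weightedCoeffsIn M wt n ≤ weightedCoeffsIn N wt n' := fun _ hp =>
  ⟨fun m => hM (hp.1 m), fun _ hm => (hp.2 hm).trans hn⟩

theorem monomial_mem_weightedCoeffsIn {m : σ →₀ ℕ} {a : R} (ha : a ∈ M)
    (hm : Finsupp.weight wt m ≤ n) : monomial m a ∈ weightedCoeffsIn M wt n :=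
  ⟨monomial_mem_coeffsIn.2 ha, (monomial_mem_restrictSupport R).2 (.inl hm)⟩

open scoped Pointwise in
theorem mul_mem_weightedCoeffsIn [IsOrderedAddMonoid Γ] (hp : p ∈ weightedCoeffsIn M wt n)
    (hr : r ∈ weightedCoeffsIn N wt n') : p * r ∈ weightedCoeffsIn (M * N) wt (n + n') := by
  refine ⟨coeffsIn_mul M N ▸ Submodule.mul_mem_mul hp.1 hr.1, ?_⟩
  have hsupp : p * r ∈ restrictSupport R
      ({m | Finsupp.weight wt m ≤ n} + {m | Finsupp.weight wt m ≤ n'}) := by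
    rw [restrictSupport_add]
    exact Submodule.mul_mem_mul hp.2 hr.2
  refine restrictSupport_mono R (Set.add_subset_iff.2 fun m hm m' hm' => ?_) hsupp
  rw [Set.mem_ofPred_eq, map_add]
  exact add_le_add hm hm'

theorem rescaleVars_mem_weightedCoeffsIn {s : σ → R} (hs : ∀ i, s i ∈ A)
    (hp : p ∈ weightedCoeffsIn M wt n) :
    rescaleVars s p ∈ weightedCoeffsIn M wt n := by
  refine ⟨fun m => ?_, fun m hm => hp.2 (support_rescaleVars_subset s p hm)⟩
  rw [coeff_rescaleVars]
  exact M.smul_mem ⟨_, prod_mem fun i _ => pow_mem (hs i) _⟩ (hp.1 m)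

end WeightedCoeffs

section ZPow

variable {σ F : Type*} [Field F] {A : Subring F} {M : Submodule A F} {t : F}

theorem mem_span_zpow_iff (ht : t ≠ 0) {d : ℤ} {a : F} :
    a ∈ Submodule.span A {t ^ d} ↔ t ^ (-d) * a ∈ A := by
  rw [Submodule.mem_span_singleton]
  constructor
  · rintro ⟨r, rfl⟩
    rw [Subring.smul_def, smul_eq_mul, mul_left_comm, ← zpow_add₀ ht, neg_add_cancel, zpow_zero,
      mul_one]
    exact r.2
  · intro h
    refine ⟨⟨_, h⟩, ?_⟩
    rw [Subring.smul_def, smul_eq_mul, mul_right_comm, ← zpow_add₀ ht, neg_add_cancel, zpow_zero,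
      one_mul]

theorem span_zpow_mul_span_zpow (ht : t ≠ 0) (d e : ℤ) :
    Submodule.span A {t ^ d} * Submodule.span A {t ^ e} = Submodule.span A {t ^ (d + e)} := by
  rw [Submodule.span_mul_span, Set.singleton_mul_singleton, zpow_add₀ ht]

theorem finsuppProd_zpow_pow (ht : t ≠ 0) (wt : σ → ℤ) (m : σ →₀ ℕ) :
    (m.prod fun i k => (t ^ wt i) ^ k) = t ^ Finsupp.weight wt m := by
  induction m using Finsupp.induction_linear with
  | zero => rw [Finsupp.prod_zero_index, map_zero, zpow_zero]
  | add m m' hm hm' =>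
    rw [Finsupp.prod_add_index' (fun _ => pow_zero _) fun _ _ _ => pow_add _ _ _, hm, hm',
      map_add, zpow_add₀ ht]
  | single i k =>
    rw [Finsupp.prod_single_index (h := fun i k => (t ^ wt i) ^ k) (pow_zero _),
      Finsupp.weight_single, nsmul_eq_mul, mul_comm, zpow_mul, zpow_natCast]

theorem rescaleVars_zpow_mem_weightedCoeffsIn (ht : t ≠ 0) (htA : t⁻¹ ∈ A) {wt : σ → ℤ} {n : ℤ}
    {p : MvPolynomial σ F} (hp : p ∈ weightedCoeffsIn M wt n) :
    rescaleVars (fun i => t ^ wt i) p ∈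
      weightedCoeffsIn (Submodule.span A {t ^ n} * M) wt n := by
  refine ⟨fun m => ?_, fun m hm => hp.2 (support_rescaleVars_subset _ p hm)⟩
  rw [coeff_rescaleVars, finsuppProd_zpow_pow ht]
  by_cases hm : m ∈ p.support
  · refine Submodule.mul_mem_mul ((mem_span_zpow_iff ht).2 ?_) (hp.1 m)
    obtain ⟨k, hk⟩ := Int.le.dest (hp.2 hm)
    rw [← zpow_add₀ ht, ← hk, neg_add_rev, neg_add_cancel_right, zpow_neg, zpow_natCast, ← inv_pow]
    exact pow_mem htA k
  · rw [notMem_support_iff.1 hm, mul_zero]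
    exact zero_mem _

end ZPow

theorem q_ne_zero : q ≠ 0 := RatFunc.X_ne_zero

theorem scl_eq_rescaleVars (a b c d : ℤ) :
    scl a b c d = rescaleVars fun i => q ^ (![a, b, c, d] i) := by
  refine algHom_ext fun i => ?_
  fin_cases i <;> simp [scl, rescaleVars]

/-- The coefficient ring `ℤ[q⁻²]`. -/
def invSqRing : Subring K := Subring.closure {q ^ (-2 : ℤ)}

theorem zpow_neg_two_mem_invSqRing : q ^ (-2 : ℤ) ∈ invSqRing :=
  Subring.subset_closure (Set.mem_singleton _)

theorem zpow_mem_invSqRing {e : ℤ} (he : e ≤ 0) (heven : 2 ∣ e) : q ^ e ∈ invSqRing := by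
  obtain ⟨k, rfl⟩ : ∃ k : ℕ, e = -2 * k := ⟨(-e / 2).toNat, by omega⟩
  rw [zpow_mul, zpow_natCast]
  exact pow_mem zpow_neg_two_mem_invSqRing k

/-- The weights of `x, y, z, w`; the substitution `scl (-4) 2 (-4) 0` multiplies a monomial of
weight `k` by `q ^ (2 * k)`. -/
def qWeight : Fin 4 → ℤ := ![-2, 1, -2, 0]

/-- The polynomials with monomials of weight at most `n` and coefficients in `q ^ d * ℤ[q⁻²]`. -/
def qBound (n d : ℤ) : Submodule invSqRing P4 :=
  weightedCoeffsIn (Submodule.span invSqRing {q ^ d}) qWeight n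

namespace qBound

variable {n n' d d' : ℤ} {p r : P4}

theorem mono (hp : p ∈ qBound n d) (hn : n ≤ n') (hd : d ≤ d') (heven : 2 ∣ d' - d) :
    p ∈ qBound n' d' := by
  refine weightedCoeffsIn_mono (Submodule.span_le.2 (Set.singleton_subset_iff.2 ?_)) hn hp
  rw [SetLike.mem_coe, mem_span_zpow_iff q_ne_zero, ← zpow_add₀ q_ne_zero]
  exact zpow_mem_invSqRing (by omega) (by omega)

theorem mul_mem (hp : p ∈ qBound n d) (hr : r ∈ qBound n' d') :
    p * r ∈ qBound (n + n') (d + d') := by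
  rw [qBound, ← span_zpow_mul_span_zpow q_ne_zero]
  exact mul_mem_weightedCoeffsIn hp hr

theorem C_zpow_mem (d : ℤ) : C (q ^ d) ∈ qBound 0 d :=
  monomial_mem_weightedCoeffsIn (Submodule.mem_span_singleton_self _) (map_zero _).le

theorem one_mem : (1 : P4) ∈ qBound 0 0 := by
  simpa using C_zpow_mem 0

theorem X_mem (i : Fin 4) : (X i : P4) ∈ qBound (qWeight i) 0 :=
  monomial_mem_weightedCoeffsIn (by simp) (by simp [Finsupp.weight_single])

theorem xP_mem : xP ∈ qBound (-2) 0 := X_mem 0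
theorem yP_mem : yP ∈ qBound 1 0 := X_mem 1
theorem zP_mem : zP ∈ qBound (-2) 0 := X_mem 2
theorem wP_mem : wP ∈ qBound 0 0 := X_mem 3

theorem sub_one_mem (hp : p ∈ qBound n 0) (hn : 0 ≤ n) : p - 1 ∈ qBound n 0 :=
  sub_mem hp (mono one_mem hn le_rfl (by norm_num))

theorem xP_sub_one_mem : xP - 1 ∈ qBound 0 0 :=
  sub_one_mem (mono xP_mem (by norm_num) le_rfl (by norm_num)) le_rfl

theorem yP_sub_one_mem : yP - 1 ∈ qBound 1 0 :=
  sub_one_mem yP_mem zero_le_one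

theorem zP_sub_one_mem : zP - 1 ∈ qBound 0 0 :=
  sub_one_mem (mono zP_mem (by norm_num) le_rfl (by norm_num)) le_rfl

theorem wP_sub_one_mem : wP - 1 ∈ qBound 0 0 :=
  sub_one_mem wP_mem le_rfl

theorem scl_mem {a b c e : ℤ} (hle : ∀ i, ![a, b, c, e] i ≤ 0)
    (heven : ∀ i, 2 ∣ ![a, b, c, e] i) (hp : p ∈ qBound n d) : scl a b c e p ∈ qBound n d := by
  rw [scl_eq_rescaleVars]
  exact rescaleVars_mem_weightedCoeffsIn (fun i => zpow_mem_invSqRing (hle i) (heven i)) hp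

theorem scl_two_mul_qWeight_mem (hp : p ∈ qBound n d) :
    scl (-4) 2 (-4) 0 p ∈ qBound n (d + 2 * n) := by
  have hscl : scl (-4) 2 (-4) 0 = rescaleVars fun i => (q ^ (2 : ℤ)) ^ qWeight i := by
    rw [scl_eq_rescaleVars]
    congr 1 with i
    rw [← zpow_mul]
    fin_cases i <;> rfl
  have hinv : (q ^ (2 : ℤ))⁻¹ ∈ invSqRing := by
    rw [← zpow_neg]
    exact zpow_neg_two_mem_invSqRing
  rw [hscl, qBound, add_comm d, ← span_zpow_mul_span_zpow q_ne_zero, zpow_mul]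
  exact rescaleVars_zpow_mem_weightedCoeffsIn (zpow_ne_zero 2 q_ne_zero) hinv hp

theorem recursion_mem {c₁ c₂ c₃ c₄ c₅ : P4} (hp : p ∈ qBound n d)
    (h₁ : c₁ ∈ qBound (n' - n) d') (h₂ : c₂ ∈ qBound (n' - n) d')
    (h₃ : c₃ ∈ qBound (n' - n) d') (h₄ : c₄ ∈ qBound (n' - n) (d' - 2 * n))
    (h₅ : c₅ ∈ qBound (n' - n) d') :
    c₁ * scl 0 0 (-4) 0 p + c₂ * scl 0 (-2) 0 0 p + c₃ * scl 0 (-2) 0 (-2) p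
      + c₄ * scl (-4) 2 (-4) 0 p + c₅ * scl (-4) 0 0 (-2) p ∈ qBound n' (d' + d) := by
  have hscl {r : P4} (hc : r ∈ qBound (n' - n) d') {a b c e : ℤ} (hle : ∀ i, ![a, b, c, e] i ≤ 0)
      (heven : ∀ i, 2 ∣ ![a, b, c, e] i) : r * scl a b c e p ∈ qBound n' (d' + d) := by
    simpa only [sub_add_cancel] using mul_mem hc (scl_mem hle heven hp)
  have hexc : c₄ * scl (-4) 2 (-4) 0 p ∈ qBound n' (d' + d) := by
    simpa only [sub_add_cancel, sub_add_add_cancel] using mul_mem h₄ (scl_two_mul_qWeight_mem hp)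
  exact add_mem (add_mem (add_mem (add_mem (hscl h₁ (by decide) (by decide))
    (hscl h₂ (by decide) (by decide))) (hscl h₃ (by decide) (by decide))) hexc)
    (hscl h₅ (by decide) (by decide))

theorem Qb0_mem (b : ℕ) : Qb0 b ∈ qBound b (3 * (b : ℤ) * ((b : ℤ) - 1)) := by
  induction b with
  | zero => simpa [Qb0] using one_mem
  | succ b ih =>
    have hφ : 3 * ((b + 1 : ℕ) : ℤ) * (((b + 1 : ℕ) : ℤ) - 1) = 6 * b + 3 * b * (b - 1) := by
      push_cast
      ring
    rw [hφ, Qb0]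
    refine recursion_mem ih ?_ ?_ ?_ ?_ ?_
    · exact mono (mul_mem (mul_mem (mul_mem (C_zpow_mem _) wP_mem) yP_mem) zP_sub_one_mem)
        (by omega) (by omega) (by omega)
    · exact mono (mul_mem (mul_mem (mul_mem (mul_mem (mul_mem (C_zpow_mem _) wP_mem) xP_mem)
        yP_sub_one_mem) yP_mem) zP_mem) (by omega) (by omega) (by omega)
    · exact mono (mul_mem (mul_mem (C_zpow_mem _) wP_sub_one_mem) yP_sub_one_mem)
        (by omega) (by omega) (by omega)
    · exact mono (mul_mem (mul_mem (mul_mem (mul_mem (C_zpow_mem _) wP_mem) xP_sub_one_mem)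
        yP_mem) zP_sub_one_mem) (by omega) (by omega) (by omega)
    · exact mono (mul_mem (mul_mem (mul_mem (C_zpow_mem _) wP_sub_one_mem) xP_sub_one_mem)
        yP_mem) (by omega) (by omega) (by omega)

theorem C_zpow_sub_mem {d : ℤ} (hd : 2 ≤ d) (heven : 2 ∣ d) :
    C (q ^ d) - C (q ^ (2 : ℤ)) * wP * yP * zP ∈ qBound 0 d :=
  sub_mem (C_zpow_mem d) <| mono (mul_mem (mul_mem (mul_mem (C_zpow_mem 2) wP_mem) yP_mem) zP_mem)
    (by omega) (by omega) (by omega)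

theorem Q_mem (b c : ℕ) :
    Q b c ∈ qBound b (3 * (b : ℤ) * ((b : ℤ) - 1) + 2 * (c : ℤ) * (3 * (c : ℤ) - 2)
      + 8 * (b : ℤ) * (c : ℤ)) := by
  induction c with
  | zero => simpa [Q] using Qb0_mem b
  | succ c ih =>
    have hφ : 3 * (b : ℤ) * ((b : ℤ) - 1) + 2 * ((c + 1 : ℕ) : ℤ) * (3 * ((c + 1 : ℕ) : ℤ) - 2)
        + 8 * (b : ℤ) * ((c + 1 : ℕ) : ℤ) = (8 * b + 12 * c + 2) + (3 * (b : ℤ) * ((b : ℤ) - 1)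
        + 2 * (c : ℤ) * (3 * (c : ℤ) - 2) + 8 * (b : ℤ) * (c : ℤ)) := by
      push_cast
      ring
    have hfactor := C_zpow_sub_mem (d := 2 * (b : ℤ) + 4 * (c : ℤ) + 4) (by omega) (by omega)
    rw [hφ, Q, sub_eq_add_neg (_ + _ : P4), ← neg_mul (_ * zP), pow_two wP]
    refine recursion_mem ih ?_ ?_ ?_ ?_ ?_
    · exact neg_mem <| mono (mul_mem (mul_mem (mul_mem (mul_mem (C_zpow_mem _)
        (mul_mem wP_mem wP_mem)) yP_mem) zP_sub_one_mem) zP_mem) (by omega) (by omega) (by omega)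
    · exact mono (mul_mem (mul_mem (mul_mem (mul_mem (mul_mem (C_zpow_mem _) wP_mem) xP_mem)
        yP_sub_one_mem) zP_mem) hfactor) (by omega) (by omega) (by omega)
    · exact neg_mem <| mono (mul_mem (mul_mem (mul_mem (mul_mem (C_zpow_mem _) wP_sub_one_mem)
        wP_mem) yP_sub_one_mem) zP_mem) (by omega) (by omega) (by omega)
    · exact mono (mul_mem (mul_mem (mul_mem (mul_mem (C_zpow_mem _) wP_mem) xP_sub_one_mem)
        zP_sub_one_mem) hfactor) (by omega) (by omega) (by omega)
    · exact mono (mul_mem (mul_mem (mul_mem (C_zpow_mem _) wP_sub_one_mem) xP_sub_one_mem)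
        hfactor) (by omega) (by omega) (by omega)

end qBound

/-- with `φ_{b,c} = 3b(b−1) + 2c(3c−2) + 8bc`, every coefficient of
`q^{−φ_{b,c}}·Q_{b,c}` lies in the subring `ℤ[q^{−2}] ⊆ K = ℚ(q)`. -/
theorem Q_coeff_inv_mem (b c : ℕ) (m : Fin 4 →₀ ℕ) :
    q ^ (-(3 * (b : ℤ) * ((b : ℤ) - 1) + 2 * (c : ℤ) * (3 * (c : ℤ) - 2)
          + 8 * (b : ℤ) * (c : ℤ))) * MvPolynomial.coeff m (Q b c)
      ∈ Subring.closure {q ^ (-2 : ℤ)} :=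
  (mem_span_zpow_iff q_ne_zero).1 ((qBound.Q_mem b c).1 m)
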